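/- For all s with 0 < Re(s) < 1 (in fact for all s by analytic continuation), the Mellin transform ∫₀^∞ x^{s−1} Θ(x) dx equals the completed Riemann xi function ξ(s) = (1/2)s(s−1)π^{−s/2}Γ(s/2)ζ(s). -/

import Mathlib

open Real MeasureTheory

noncomputable def Theta (x : ℝ) : ℝ :=
  2 * x ^ 2 * ∑' n : ℕ,
    (2 * π ^ 2 * ((n : ℝ) + 1) ^ 4 * x ^ 2 - 3 * π * ((n : ℝ) + 1) ^ 2) *
      Real.exp (-π * ((n : ℝ) + 1) ^ 2 * x ^ 2)

noncomputable def xi (s : ℂ) : ℂ :=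
  (1 / 2) * s * (s - 1) * (π : ℂ) ^ (-s / 2) * Complex.Gamma (s / 2) * riemannZeta s

open Filter Topology Asymptotics Set HurwitzZeta

/-- The series `∑ n^(2i) exp(-π n² t)`. -/
noncomputable def TT (i : ℕ) (t : ℝ) : ℝ :=
  ∑' n : ℕ, ((n : ℝ) + 1) ^ (2 * i) * Real.exp (-π * ((n : ℝ) + 1) ^ 2 * t)

lemma TT_summable (i : ℕ) {t : ℝ} (ht : 0 < t) :
    Summable fun n : ℕ => ((n : ℝ) + 1) ^ (2 * i) * Real.exp (-π * ((n : ℝ) + 1) ^ 2 * t) :=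
  HurwitzKernelBounds.summable_f_nat (2 * i) 1 ht

lemma TT_nonneg (i : ℕ) (t : ℝ) : 0 ≤ TT i t :=
  tsum_nonneg fun n => by positivity

lemma TT_hasDerivAt (i : ℕ) {t : ℝ} (ht : 0 < t) :
    HasDerivAt (TT i) (-π * TT (i + 1) t) t := by
  have h := hasDerivAt_tsum_of_isPreconnected (𝕜 := ℝ) (t := Ioi (t / 2)) (y₀ := t) (y := t)
    (g := fun (n : ℕ) z => ((n : ℝ) + 1) ^ (2 * i) * Real.exp (-π * ((n : ℝ) + 1) ^ 2 * z))
    (g' := fun (n : ℕ) z =>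
      -π * (((n : ℝ) + 1) ^ (2 * (i + 1)) * Real.exp (-π * ((n : ℝ) + 1) ^ 2 * z)))
    (u := fun n : ℕ =>
      π * (((n : ℝ) + 1) ^ (2 * (i + 1)) * Real.exp (-π * ((n : ℝ) + 1) ^ 2 * (t / 2))))
    ((TT_summable (i + 1) (half_pos ht)).mul_left π) isOpen_Ioi isPreconnected_Ioi
    (fun n y _ => by
      have h1 : HasDerivAt (fun z : ℝ => -π * ((n : ℝ) + 1) ^ 2 * z) (-π * ((n : ℝ) + 1) ^ 2) y := by
        simpa only [mul_one, id] using (hasDerivAt_id y).const_mul (-π * ((n : ℝ) + 1) ^ 2)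
      refine (h1.exp.const_mul (((n : ℝ) + 1) ^ (2 * i))).congr_deriv ?_
      ring)
    (fun n y hy => by
      have hy' : t / 2 ≤ y := le_of_lt hy
      rw [norm_mul, norm_neg, Real.norm_of_nonneg pi_pos.le, Real.norm_of_nonneg (by positivity)]
      gcongr ?_ * (?_ * Real.exp ?_)
      have : 0 ≤ π * ((n : ℝ) + 1) ^ 2 := by positivity
      nlinarith)
    (half_lt_self ht) (TT_summable i ht) (half_lt_self ht)
  rw [tsum_mul_left] at h
  exact h

lemma TT_continuousOn (i : ℕ) : ContinuousOn (TT i) (Ioi 0) :=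
  fun _ ht => (TT_hasDerivAt i ht).continuousAt.continuousWithinAt

lemma TT_top (i : ℕ) (r : ℝ) : TT i =O[atTop] (fun x : ℝ => x ^ r) := by
  refine IsBigO.trans ?_ (isLittleO_exp_neg_mul_rpow_atTop pi_pos r).isBigO
  refine IsBigO.of_bound (Real.exp π * TT i 1) ?_
  filter_upwards [eventually_ge_atTop 1] with t ht
  rw [Real.norm_of_nonneg (TT_nonneg i t), Real.norm_of_nonneg (Real.exp_pos _).le, mul_right_comm,
    ← Real.exp_add, TT, TT, ← tsum_mul_left]
  refine Summable.tsum_le_tsum (fun n => ?_) (TT_summable i (by linarith))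
    ((TT_summable i one_pos).mul_left _)
  rw [mul_left_comm, ← Real.exp_add]
  gcongr
  have h1 : (1 : ℝ) ≤ ((n : ℝ) + 1) ^ 2 := by
    have : (0 : ℝ) ≤ n := by positivity
    nlinarith
  have h2 : 0 ≤ π * ((t - 1) * (((n : ℝ) + 1) ^ 2 - 1)) :=
    mul_nonneg pi_pos.le (mul_nonneg (by linarith) (by linarith))
  nlinarith

lemma TT_zero (i : ℕ) : TT i =O[𝓝[>] 0] (fun x : ℝ => x ^ (-((i : ℝ) + 1))) := by
  have hs : Summable fun n : ℕ => 1 / ((n : ℝ) + 1) ^ 2 := by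
    have := (summable_nat_add_iff 1).mpr (Real.summable_one_div_nat_pow.mpr one_lt_two)
    simpa using this
  refine IsBigO.of_bound (((i + 1).factorial : ℝ) / π ^ (i + 1) * ∑' n : ℕ, 1 / ((n : ℝ) + 1) ^ 2) ?_
  filter_upwards [self_mem_nhdsWithin] with t ht
  have ht : 0 < t := ht
  rw [Real.norm_of_nonneg (TT_nonneg i t), Real.norm_of_nonneg (by positivity),
    Real.rpow_neg ht.le, mul_right_comm, TT, ← tsum_mul_left]
  refine Summable.tsum_le_tsum (fun n => ?_) (TT_summable i ht) (hs.mul_left _)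
  have hx : 0 < π * ((n : ℝ) + 1) ^ 2 * t := by positivity
  have h := Real.pow_div_factorial_le_exp _ hx.le (i + 1)
  have e : -π * ((n : ℝ) + 1) ^ 2 * t = -(π * ((n : ℝ) + 1) ^ 2 * t) := by ring
  rw [e, Real.exp_neg]
  have h2 := inv_anti₀ (by positivity) h
  have h3 : t ^ ((i : ℝ) + 1) = t ^ (i + 1) := by
    rw [← Real.rpow_natCast]; push_cast; rfl
  rw [h3]
  calc _ ≤ ((n : ℝ) + 1) ^ (2 * i) * ((π * ((n : ℝ) + 1) ^ 2 * t) ^ (i + 1) / (i + 1).factorial)⁻¹ := by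
        gcongr
    _ = _ := by
        have : ((n : ℝ) + 1) ≠ 0 := by positivity
        generalize (n : ℝ) + 1 = m at this ⊢
        rw [mul_pow, mul_pow, ← pow_mul]
        field_simp
        ring

lemma TT_locInt (i : ℕ) : LocallyIntegrableOn (fun t => (TT i t : ℂ)) (Ioi 0) :=
  (Complex.continuous_ofReal.comp_continuousOn (TT_continuousOn i)).locallyIntegrableOn
    measurableSet_Ioi

lemma TT_mellinConvergent (i : ℕ) {w : ℂ} (hw : 1 < w.re) :
    MellinConvergent (fun t => (TT i t : ℂ)) (w + i) := by
  refine mellinConvergent_of_isBigO_rpow (a := (w + i).re + 1) (b := (i : ℝ) + 1) (TT_locInt i)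
    ?_ (by linarith) ?_ ?_
  · exact Complex.isBigO_ofReal_left.mpr (TT_top i _)
  · exact Complex.isBigO_ofReal_left.mpr (TT_zero i)
  · simp; linarith

lemma TT_mellin (i : ℕ) {w : ℂ} (hw : 1 < w.re) :
    mellin (fun t => (TT i t : ℂ)) (w + i) =
      (π : ℂ) ^ (-(w + i)) * Complex.Gamma (w + i) * riemannZeta (2 * w) := by
  have hz : 1 < (2 * w).re := by simp; linarith
  have key : ∀ n : ℕ, (((n : ℝ) + 1) ^ (2 * i) : ℝ) / (((((n : ℝ) + 1) ^ 2 : ℝ)) : ℂ) ^ (w + i)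
      = 1 / ((n : ℂ) + 1) ^ (2 * w) := by
    intro n
    have hn : (0 : ℝ) < (n : ℝ) + 1 := by positivity
    have hn' : ((n : ℂ) + 1) ≠ 0 := by exact_mod_cast hn.ne'
    have e1 : ((((n : ℝ) + 1) ^ 2 : ℝ) : ℂ) ^ (w + i) = ((n : ℂ) + 1) ^ (2 * w) * ((n : ℂ) + 1) ^ (2 * i) := by
      have : ((((n : ℝ) + 1) ^ 2 : ℝ) : ℂ) = (((n : ℝ) + 1 : ℝ) : ℂ) * (((n : ℝ) + 1 : ℝ) : ℂ) := by
        push_cast; ring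
      rw [this, Complex.mul_cpow_ofReal_nonneg hn.le hn.le]
      push_cast
      rw [← Complex.cpow_add _ _ hn', ← Complex.cpow_natCast, ← Complex.cpow_add _ _ hn']
      congr 1; push_cast; ring
    rw [e1]
    push_cast
    have h3 : ((n : ℂ) + 1) ^ (2 * w) ≠ 0 := by simp [Complex.cpow_eq_zero_iff, hn']
    field_simp
  have H := hasSum_mellin_pi_mul (a := fun n : ℕ => ((((n : ℝ) + 1) ^ (2 * i) : ℝ) : ℂ))
    (q := fun n : ℕ => ((n : ℝ) + 1) ^ 2) (F := fun t => (TT i t : ℂ)) (s := w + i)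
    (fun n => Or.inr (by positivity)) (by simp; positivity)
    (fun t ht => by
      have := (TT_summable i ht).hasSum
      have := Complex.hasSum_ofReal.mpr this
      simpa only [Complex.ofReal_mul, TT] using this)
    (by
      have := (summable_nat_add_iff 1).mpr (Complex.summable_one_div_nat_cpow.mpr hz)
      refine this.norm.congr fun n => ?_
      have hn : (0 : ℝ) < ((n : ℝ) + 1) ^ 2 := by positivity
      rw [Nat.cast_add, Nat.cast_one, ← key n, norm_div, Complex.norm_cpow_eq_rpow_re_of_pos hn])
  rw [← H.tsum_eq, zeta_eq_tsum_one_div_nat_add_one_cpow hz, ← tsum_mul_left]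
  refine tsum_congr fun n => ?_
  rw [← key n, mul_div_assoc]

/-- `Theta` in the variable `t = x²`. -/
noncomputable def Phi (t : ℝ) : ℝ := 4 * π ^ 2 * (t ^ 2 * TT 2 t) - 6 * π * (t * TT 1 t)

lemma Theta_eq {x : ℝ} (hx : 0 < x) : Theta x = Phi (x ^ 2) := by
  have hx2 : 0 < x ^ 2 := by positivity
  have : ∑' n : ℕ, (2 * π ^ 2 * ((n : ℝ) + 1) ^ 4 * x ^ 2 - 3 * π * ((n : ℝ) + 1) ^ 2) *
      Real.exp (-π * ((n : ℝ) + 1) ^ 2 * x ^ 2) =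
      2 * π ^ 2 * x ^ 2 * TT 2 (x ^ 2) - 3 * π * TT 1 (x ^ 2) := by
    rw [TT, TT, ← tsum_mul_left, ← tsum_mul_left,
      ← ((TT_summable 2 hx2).mul_left _).tsum_sub ((TT_summable 1 hx2).mul_left _)]
    refine tsum_congr fun n => ?_
    ring
  rw [Theta, this, Phi]
  ring

lemma TT0_feq {t : ℝ} (ht : 0 < t) : 1 + 2 * TT 0 t⁻¹ = √t * (1 + 2 * TT 0 t) := by
  have hk : ∀ u : ℝ, 0 < u → cosKernel 0 u = 1 + 2 * TT 0 u := by
    intro u hu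
    have := (hasSum_nat_cosKernel₀ 0 hu).tsum_eq
    simp only [mul_zero, zero_mul, Real.cos_zero, mul_one] at this
    rw [tsum_mul_left] at this
    simp only [TT, mul_zero, pow_zero, one_mul, this]
    simp
  have h := evenKernel_functional_equation 0 t
  rw [evenKernel_eq_cosKernel_of_zero, hk t ht, one_div t, hk _ (inv_pos.mpr ht),
    ← Real.sqrt_eq_rpow] at h
  have : √t ≠ 0 := (Real.sqrt_pos.mpr ht).ne'
  rw [h]; field_simp

lemma TT1_feq {t : ℝ} (ht : 0 < t) :
    -2 * π * TT 1 t⁻¹ = -(√t * (t * (1 + 2 * TT 0 t) / 2 + t ^ 2 * (-2 * π * TT 1 t))) := by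
  have hL := (((TT_hasDerivAt 0 (inv_pos.mpr ht)).comp t (hasDerivAt_inv ht.ne')).const_mul 2).const_add 1
  have hR := (Real.hasDerivAt_sqrt ht.ne').mul (((TT_hasDerivAt 0 ht).const_mul 2).const_add 1)
  have := hL.unique (hR.congr_of_eventuallyEq ?_)
  · have hr : √t ≠ 0 := (Real.sqrt_pos.mpr ht).ne'
    have hrr : √t ^ 2 = t := Real.sq_sqrt ht.le
    simp only [zero_add] at this
    generalize TT 1 t⁻¹ = A at this ⊢
    field_simp at this
    simp only [hrr] at this
    apply mul_left_cancel₀ hr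
    linear_combination (-1 / 2) * this + (t * (1 + 2 * TT 0 t) / 2 + t ^ 2 * (-2 * π * TT 1 t)) * hrr
  · filter_upwards [lt_mem_nhds ht] with u hu
    exact TT0_feq hu

lemma TT2_feq {t : ℝ} (ht : 0 < t) :
    2 * π ^ 2 * TT 2 t⁻¹ = √t * (3 / 4 * t ^ 2 * (1 + 2 * TT 0 t) + 3 * t ^ 3 * (-2 * π * TT 1 t)
      + t ^ 4 * (2 * π ^ 2 * TT 2 t)) := by
  have hL := ((TT_hasDerivAt 1 (inv_pos.mpr ht)).comp t (hasDerivAt_inv ht.ne')).const_mul (-2 * π)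
  have hK := ((TT_hasDerivAt 0 ht).const_mul 2).const_add 1
  have hK1 := (TT_hasDerivAt 1 ht).const_mul (-2 * π)
  have hR := ((Real.hasDerivAt_sqrt ht.ne').mul ((((hasDerivAt_id t).mul hK).div_const 2).add
    (((hasDerivAt_id t).pow 2).mul hK1))).neg
  have := hL.unique (hR.congr_of_eventuallyEq ?_)
  · have hr : √t ≠ 0 := (Real.sqrt_pos.mpr ht).ne'
    have hrr : √t ^ 2 = t := Real.sq_sqrt ht.le
    simp only [zero_add, id, Pi.mul_apply, Pi.add_apply, Pi.pow_apply] at this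
    norm_num at this
    generalize TT 2 t⁻¹ = A at this ⊢
    field_simp at this
    simp only [hrr] at this
    apply mul_left_cancel₀ hr
    linear_combination (-1 / 4) * this - (3 / 4 * t ^ 2 * (1 + 2 * TT 0 t)
      + 3 * t ^ 3 * (-2 * π * TT 1 t) + t ^ 4 * (2 * π ^ 2 * TT 2 t)) * hrr
  · filter_upwards [lt_mem_nhds ht] with u hu
    exact TT1_feq hu

lemma Phi_feq {t : ℝ} (ht : 0 < t) : Phi t⁻¹ = √t * Phi t := by
  have h1 := TT1_feq ht
  have h2 := TT2_feq ht
  have e : Phi t⁻¹ = 2 * (t⁻¹) ^ 2 * (2 * π ^ 2 * TT 2 t⁻¹) + 3 * t⁻¹ * (-2 * π * TT 1 t⁻¹) := by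
    rw [Phi]; ring
  rw [e, h1, h2, Phi]
  field_simp
  ring

lemma Phi_top (r : ℝ) : (fun t => (Phi t : ℂ)) =O[atTop] (fun x : ℝ => x ^ r) := by
  refine Complex.isBigO_ofReal_left.mpr ?_
  unfold Phi
  have aux : ∀ i j : ℕ, (fun t : ℝ => t ^ j * TT i t) =O[atTop] (fun x : ℝ => x ^ r) := by
    intro i j
    have := (isBigO_refl (fun t : ℝ => t ^ j) atTop).mul (TT_top i (r - j))
    refine this.congr' EventuallyEq.rfl ?_
    filter_upwards [eventually_gt_atTop 0] with t ht
    rw [← Real.rpow_natCast, ← Real.rpow_add ht]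
    congr 1; ring
  refine ((aux 2 2).const_mul_left _).sub (IsBigO.const_mul_left ?_ _)
  simpa using aux 1 1

/-- The strong functional equation pair attached to `Phi`. -/
noncomputable def PhiPair : WeakFEPair ℂ where
  f := fun t => (Phi t : ℂ)
  g := fun t => (Phi t : ℂ)
  k := 1 / 2
  ε := 1
  f₀ := 0
  g₀ := 0
  hf_int := by
    refine ContinuousOn.locallyIntegrableOn ?_ measurableSet_Ioi
    have h1 := TT_continuousOn 1
    have h2 := TT_continuousOn 2
    unfold Phi
    fun_prop
  hg_int := by
    refine ContinuousOn.locallyIntegrableOn ?_ measurableSet_Ioi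
    have h1 := TT_continuousOn 1
    have h2 := TT_continuousOn 2
    unfold Phi
    fun_prop
  hk := by norm_num
  hε := one_ne_zero
  h_feq := fun x hx => by
    rw [one_div, Phi_feq hx, ← Real.sqrt_eq_rpow]
    simp
  hf_top := fun r => by simpa using Phi_top r
  hg_top := fun r => by simpa using Phi_top r

lemma PhiPair_strong : IsStrongFEPair PhiPair := ⟨rfl, rfl⟩

lemma mellin_Phi_differentiable : Differentiable ℂ (mellin (fun t => (Phi t : ℂ))) := by
  have h := PhiPair_strong.differentiable_Λ
  rw [PhiPair_strong.Λ_eq] at h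
  exact h

lemma mellin_Phi {w : ℂ} (hw : 1 < w.re) : mellin (fun t => (Phi t : ℂ)) w =
    (π : ℂ) ^ (-w) * Complex.Gamma w * (w * (4 * w - 2)) * riemannZeta (2 * w) := by
  have hw0 : w ≠ 0 := fun h => by simp [h] at hw; linarith
  have hw1 : w + 1 ≠ 0 := fun h => by
    have := congrArg Complex.re h; simp at this; linarith
  have c2 := (MellinConvergent.cpow_smul.mpr (TT_mellinConvergent 2 hw)).const_smul (4 * (π : ℂ) ^ 2)
  have c1 := (MellinConvergent.cpow_smul.mpr (TT_mellinConvergent 1 hw)).const_smul (6 * (π : ℂ))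
  have h := (hasMellin_sub c2 c1).2
  rw [mellin_const_smul, mellin_const_smul, mellin_cpow_smul, mellin_cpow_smul, TT_mellin 2 hw,
    TT_mellin 1 hw] at h
  have e : (fun t => (Phi t : ℂ)) = fun t : ℝ => (4 * (π : ℂ) ^ 2) • ((t : ℂ) ^ ((2 : ℕ) : ℂ) • (TT 2 t : ℂ))
      - (6 * (π : ℂ)) • ((t : ℂ) ^ ((1 : ℕ) : ℂ) • (TT 1 t : ℂ)) := by
    funext t
    simp only [Complex.cpow_natCast, smul_eq_mul, Phi]
    push_cast; ring
  rw [e, h]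
  have hpi : (π : ℂ) ≠ 0 := by exact_mod_cast pi_ne_zero
  have p2 : (π : ℂ) ^ (-(w + (2 : ℕ))) = (π : ℂ) ^ (-w) / (π : ℂ) ^ 2 := by
    rw [neg_add, ← sub_eq_add_neg, Complex.cpow_sub _ _ hpi, Complex.cpow_natCast]
  have p1 : (π : ℂ) ^ (-(w + (1 : ℕ))) = (π : ℂ) ^ (-w) / (π : ℂ) := by
    rw [neg_add, ← sub_eq_add_neg, Complex.cpow_sub _ _ hpi, Complex.cpow_natCast, pow_one]
  have g1 : Complex.Gamma (w + (1 : ℕ)) = w * Complex.Gamma w := by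
    rw [Nat.cast_one, Complex.Gamma_add_one _ hw0]
  have g2 : Complex.Gamma (w + (2 : ℕ)) = (w + 1) * (w * Complex.Gamma w) := by
    rw [show w + ((2 : ℕ) : ℂ) = (w + 1) + 1 by push_cast; ring, Complex.Gamma_add_one _ hw1,
      Complex.Gamma_add_one _ hw0]
  rw [p1, p2, g1, g2]
  simp only [smul_eq_mul]
  field_simp
  ring

lemma xi_eq {s : ℂ} (h0 : 0 < s.re) (h1 : s ≠ 1) :
    xi s = (s * (s - 1) * completedRiemannZeta₀ s + 1) / 2 := by
  have hs : s ≠ 0 := fun h => by simp [h] at h0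
  have hG : Complex.Gammaℝ s ≠ 0 := Complex.Gammaℝ_ne_zero_of_re_pos h0
  have h1' : 1 - s ≠ 0 := sub_ne_zero.mpr h1.symm
  have hx : xi s = (1 / 2) * s * (s - 1) * (Complex.Gammaℝ s * riemannZeta s) := by
    rw [xi, Complex.Gammaℝ_def]; ring
  rw [hx, riemannZeta_def_of_ne_zero hs, mul_div_cancel₀ _ hG, completedRiemannZeta_eq]
  field_simp
  ring

lemma mellin_Phi_eq (s : ℂ) : mellin (fun t => (Phi t : ℂ)) (s / 2) / 2 =
    (s * (s - 1) * completedRiemannZeta₀ s + 1) / 2 := by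
  have hf : Differentiable ℂ fun s : ℂ => mellin (fun t => (Phi t : ℂ)) (s / 2) / 2 :=
    (mellin_Phi_differentiable.comp (differentiable_id.div_const 2)).div_const 2
  have hg : Differentiable ℂ fun s : ℂ => (s * (s - 1) * completedRiemannZeta₀ s + 1) / 2 := by
    have := differentiable_completedZeta₀
    fun_prop
  refine congrFun (AnalyticOnNhd.eq_of_eventuallyEq (𝕜 := ℂ) (z₀ := 3)
    (fun z _ => hf.analyticAt z) (fun z _ => hg.analyticAt z) ?_) s
  have : {z : ℂ | 2 < z.re} ∈ 𝓝 (3 : ℂ) :=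
    (isOpen_lt continuous_const Complex.continuous_re).mem_nhds (by norm_num)
  filter_upwards [this] with z hz
  have hz : 2 < z.re := hz
  rw [← xi_eq (by linarith) (fun h => by norm_num [h] at hz), mellin_Phi (by simp; linarith), xi]
  rw [show 2 * (z / 2) = z by ring, neg_div]
  ring

theorem stmt_3 (s : ℂ) (h0 : 0 < s.re) (h1 : s.re < 1) :
    (∫ x in Set.Ioi (0 : ℝ), (x : ℂ) ^ (s - 1) * (Theta x : ℂ)) = xi s := by
  rw [xi_eq h0 (fun h => by simp [h] at h1), ← mellin_Phi_eq]
  have h := mellin_comp_rpow (fun t => (Phi t : ℂ)) s 2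
  have e : (∫ x in Set.Ioi (0 : ℝ), (x : ℂ) ^ (s - 1) * (Theta x : ℂ)) =
      mellin (fun t : ℝ => (Phi (t ^ (2 : ℝ)) : ℂ)) s := by
    refine setIntegral_congr_fun measurableSet_Ioi fun x hx => ?_
    simp only [smul_eq_mul]
    rw [Theta_eq hx, Real.rpow_two]
  rw [e, h]
  simp
  ring
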